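/- Let g be an invertible linear endomorphism of a finite-dimensional real vector space, preserving a nondegenerate symmetric bilinear form B. Let V^< (resp. V^>, V^≤) be the sum of generalized eigenspaces for eigenvalues of modulus < 1 (resp. > 1, ≤ 1). Then V^< is B-orthogonal to V^≤, and dim V^< = dim V^>. -/

import Mathlib

open Filter Topology

lemma aux_norm_tendsto {E : Type*} [NormedAddCommGroup E] [NormedSpace ℝ E]
    [FiniteDimensional ℝ E] (a : E →L[ℝ] E)
    (h : ∀ x, Tendsto (fun n : ℕ => (a ^ n) x) atTop (𝓝 0)) :
    Tendsto (fun n : ℕ => a ^ n) atTop (𝓝 0) := by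
  let b := Module.finBasis ℝ E
  let F : (Fin (Module.finrank ℝ E) → E) →ₗ[ℝ] (E →L[ℝ] E) :=
    (LinearMap.toContinuousLinearMap : (E →ₗ[ℝ] E) ≃ₗ[ℝ] (E →L[ℝ] E)).toLinearMap ∘ₗ
      (b.constr ℝ).toLinearMap
  have hF : Continuous F := LinearMap.continuous_of_finiteDimensional F
  have h1 : Tendsto (fun n : ℕ => (fun i => (a ^ n) (b i))) atTop (𝓝 0) :=
    tendsto_pi_nhds.2 fun i => h (b i)
  have h2 := (hF.tendsto 0).comp h1
  rw [map_zero] at h2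
  refine h2.congr fun n => ?_
  ext x
  have : b.constr ℝ (fun i => (a ^ n) (b i)) = ((a ^ n : E →L[ℝ] E) : E →ₗ[ℝ] E) :=
    b.ext fun i => by rw [Module.Basis.constr_basis]; rfl
  exact congrArg (fun f => f x) this

lemma aux_restrict {V : Type*} [NormedAddCommGroup V] [NormedSpace ℝ V] [FiniteDimensional ℝ V]
    (g : V →ₗ[ℝ] V) (L : Submodule ℝ V)
    (hL : ∀ x, x ∈ L ↔ Tendsto (fun n : ℕ => (g ^ n) x) atTop (𝓝 0)) :
    ∃ a : L →L[ℝ] L, (∀ n x, (((a ^ n) x : L) : V) = (g ^ n) x) ∧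
      Tendsto (fun n : ℕ => a ^ n) atTop (𝓝 0) := by
  have hg : ∀ x ∈ L, g x ∈ L := by
    intro x hx
    rw [hL] at hx ⊢
    refine (hx.comp (tendsto_add_atTop_nat 1)).congr fun n => ?_
    simp [pow_succ]
  let a : L →L[ℝ] L := LinearMap.toContinuousLinearMap (g.restrict hg)
  have ha : ∀ n x, (((a ^ n) x : L) : V) = (g ^ n) x := by
    intro n
    induction n with
    | zero => intro x; simp
    | succ n ih =>
      intro x
      rw [pow_succ, pow_succ]
      change (((a ^ n) (a x) : L) : V) = (g ^ n) (g x)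
      rw [ih]; rfl
  refine ⟨a, ha, aux_norm_tendsto a fun x => ?_⟩
  rw [tendsto_subtype_rng]
  simp only [ha]
  exact (hL x).1 x.2

lemma aux_poly {V : Type*} [NormedAddCommGroup V] [NormedSpace ℝ V] [FiniteDimensional ℝ V]
    (g : V →ₗ[ℝ] V) (L : Submodule ℝ V)
    (hL : ∀ x, x ∈ L ↔ Tendsto (fun n : ℕ => (g ^ n) x) atTop (𝓝 0)) :
    ∃ p : Polynomial ℝ, (∀ x ∈ L, Polynomial.aeval g p x = 0) ∧
      ∀ (h : V →ₗ[ℝ] V) (x : V), Polynomial.aeval h p x = 0 →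
        Tendsto (fun n : ℕ => (h ^ n) x) atTop (𝓝 0) := by
  obtain ⟨a, ha, hlim⟩ := aux_restrict g L hL
  have hev : ∀ (f : Polynomial ℝ) (x : L),
      ((Polynomial.aeval a f x : L) : V) = Polynomial.aeval g f x := by
    intro f x
    induction f using Polynomial.induction_on' with
    | add p q hp hq => simp [hp, hq]
    | monomial n c =>
      rw [Polynomial.aeval_monomial, Polynomial.aeval_monomial, Algebra.algebraMap_eq_smul_one,
        Algebra.algebraMap_eq_smul_one, smul_mul_assoc, smul_mul_assoc, one_mul, one_mul]
      change c • (((a ^ n) x : L) : V) = c • (g ^ n) x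
      rw [ha]
  refine ⟨minpoly ℝ a, fun x hx => ?_, fun h x hx => ?_⟩
  · rw [← hev _ ⟨x, hx⟩, minpoly.aeval]; rfl
  · let A : Polynomial ℝ →ₗ[ℝ] (L →L[ℝ] L) := (Polynomial.aeval a).toLinearMap
    let C : Polynomial ℝ →ₗ[ℝ] V := (LinearMap.applyₗ x) ∘ₗ (Polynomial.aeval h).toLinearMap
    have hker : LinearMap.ker A ≤ LinearMap.ker C := by
      intro f hf
      obtain ⟨q, rfl⟩ := minpoly.dvd ℝ a hf
      simp [C, mul_comm (minpoly ℝ a) q, hx]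
    obtain ⟨K, hK⟩ : ∃ K : (L →L[ℝ] L) →ₗ[ℝ] V, K ∘ₗ A = C := by
      obtain ⟨K, hK⟩ := LinearMap.exists_extend
        (((LinearMap.ker A).liftQ C hker) ∘ₗ A.quotKerEquivRange.symm.toLinearMap)
      refine ⟨K, LinearMap.ext fun f => ?_⟩
      have := congrArg (fun T => T (A.rangeRestrict f)) hK
      have h2 : A.quotKerEquivRange.symm (A.rangeRestrict f) = Submodule.Quotient.mk f := by
        rw [LinearEquiv.symm_apply_eq]; rfl
      simp only [LinearMap.comp_apply, LinearEquiv.coe_coe, h2] at this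
      exact this
    have hc : Continuous K := LinearMap.continuous_of_finiteDimensional K
    have h3 := (hc.tendsto 0).comp hlim
    rw [map_zero] at h3
    refine h3.congr fun n => ?_
    have := congrArg (fun T => T (Polynomial.X ^ n)) hK
    simpa [A, C] using this

lemma aux_finrank {V : Type*} [NormedAddCommGroup V] [NormedSpace ℝ V] [FiniteDimensional ℝ V]
    (g h : V →ₗ[ℝ] V) (B : V →ₗ[ℝ] V →ₗ[ℝ] ℝ)
    (hsymm : ∀ x y, B x y = B y x)
    (hnd : ∀ x, (∀ y, B x y = 0) → x = 0)
    (hadj : ∀ x y, B (g x) y = B x (h y))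
    (L M : Submodule ℝ V)
    (hL : ∀ x, x ∈ L ↔ Tendsto (fun n : ℕ => (g ^ n) x) atTop (𝓝 0))
    (hM : ∀ x, x ∈ M ↔ Tendsto (fun n : ℕ => (h ^ n) x) atTop (𝓝 0)) :
    Module.finrank ℝ L ≤ Module.finrank ℝ M := by
  obtain ⟨p, hp1, hp2⟩ := aux_poly g L hL
  have hpow : ∀ (n : ℕ) x y, B ((g ^ n) x) y = B x ((h ^ n) y) := by
    intro n
    induction n with
    | zero => intro x y; simp
    | succ n ih =>
      intro x y
      rw [pow_succ, pow_succ']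
      simp [ih, hadj]
  have hadjp : ∀ (f : Polynomial ℝ) x y,
      B (Polynomial.aeval g f x) y = B x (Polynomial.aeval h f y) := by
    intro f x y
    induction f using Polynomial.induction_on' with
    | add p q hp hq => simp [hp, hq]
    | monomial n c => simp [Polynomial.aeval_monomial, Algebra.algebraMap_eq_smul_one, hpow]
  set T := Polynomial.aeval g p
  set S := Polynomial.aeval h p
  have hB : LinearMap.BilinForm.Nondegenerate B :=
    ⟨fun x hx => hnd x hx, fun x hx => hnd x fun y => by rw [hsymm]; exact hx y⟩
  have hr : LinearMap.BilinForm.IsRefl B := fun x y hxy => by rw [hsymm]; exact hxy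
  have h1 : Module.finrank ℝ L ≤ Module.finrank ℝ (LinearMap.ker T) :=
    Submodule.finrank_mono fun x hx => hp1 x hx
  have h2 : LinearMap.BilinForm.orthogonal B (LinearMap.range T) ≤ M := by
    intro y hy
    rw [hM]
    refine hp2 h y (hnd _ fun z => ?_)
    rw [hsymm, ← hadjp]
    exact hy _ ⟨z, rfl⟩
  have h3 := Submodule.finrank_mono h2
  have h4 := LinearMap.BilinForm.finrank_orthogonal hB (LinearMap.range T)
  have h5 := LinearMap.finrank_range_add_finrank_ker T
  omega

/-- Let `g` be an invertible linear map of a finite-dimensional real vector space preserving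
a nondegenerate symmetric bilinear form `B`.  Let `V^<` (resp. `V^>`, `V^≤`) be the sum of
generalized eigenspaces for eigenvalues of modulus `< 1` (resp. `> 1`, `≤ 1`), characterized
dynamically: `V^< = {x | gⁿ x → 0}`, `V^> = {x | g⁻ⁿ x → 0}`, and
`V^≤ = {x | gⁿ x grows subexponentially}`.  Then `V^<` is `B`-orthogonal to `V^≤`, and
`dim V^< = dim V^>`. -/
theorem form_preserving_eigenspace_orthogonality
    {V : Type*} [NormedAddCommGroup V] [NormedSpace ℝ V] [FiniteDimensional ℝ V]
    (g : V ≃ₗ[ℝ] V) (B : V →ₗ[ℝ] V →ₗ[ℝ] ℝ)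
    (hsymm : ∀ x y, B x y = B y x)
    (hnd : ∀ x, (∀ y, B x y = 0) → x = 0)
    (hinv : ∀ x y, B (g x) (g y) = B x y)
    (Vlt Vgt Vle : Submodule ℝ V)
    (hlt : ∀ x, x ∈ Vlt ↔
      Tendsto (fun n : ℕ => ((g : V →ₗ[ℝ] V) ^ n) x) atTop (𝓝 0))
    (hgt : ∀ x, x ∈ Vgt ↔
      Tendsto (fun n : ℕ => ((g.symm : V →ₗ[ℝ] V) ^ n) x) atTop (𝓝 0))
    (hle : ∀ x, x ∈ Vle ↔ ∀ r : ℝ, 1 < r →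
      Tendsto (fun n : ℕ => (r ^ n)⁻¹ • ((g : V →ₗ[ℝ] V) ^ n) x) atTop (𝓝 0)) :
    (∀ x ∈ Vlt, ∀ y ∈ Vle, B x y = 0) ∧
    Module.finrank ℝ Vlt = Module.finrank ℝ Vgt := by
  refine ⟨?_, ?_⟩
  · intro x hx y hy
    obtain ⟨a, ha, hlim⟩ := aux_restrict _ Vlt hlt
    have hev : ∀ᶠ n : ℕ in atTop, ‖a ^ n‖ < 1 / 2 := by
      have := (tendsto_zero_iff_norm_tendsto_zero (E := Vlt →L[ℝ] Vlt)).1 hlim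
      exact this.eventually (gt_mem_nhds (by norm_num))
    obtain ⟨N, hN, hN1⟩ := (hev.and (eventually_ge_atTop 1)).exists
    have hpow : ∀ (n : ℕ), B (((g : V →ₗ[ℝ] V) ^ n) x) (((g : V →ₗ[ℝ] V) ^ n) y) = B x y := by
      intro n
      induction n with
      | zero => simp
      | succ n ih => rw [pow_succ']; simpa [hinv] using ih
    obtain ⟨r, hr1, hrN⟩ : ∃ r : ℝ, 1 < r ∧ r ^ N = 2 := by
      refine ⟨(2 : ℝ) ^ ((N : ℝ)⁻¹), Real.one_lt_rpow (by norm_num) (by positivity), ?_⟩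
      exact Real.rpow_inv_natCast_pow (by norm_num) (by omega)
    let Bc : V →L[ℝ] V →L[ℝ] ℝ := LinearMap.toContinuousLinearMap
      ((LinearMap.toContinuousLinearMap : (V →ₗ[ℝ] ℝ) ≃ₗ[ℝ] (V →L[ℝ] ℝ)).toLinearMap ∘ₗ B)
    have hBc : ∀ u v, |B u v| ≤ ‖Bc‖ * ‖u‖ * ‖v‖ := fun u v => Bc.le_opNorm₂ u v
    have hNk : Tendsto (fun k : ℕ => N * k) atTop atTop :=
      tendsto_id.const_mul_atTop' (by omega)
    have hy' := (((hle y).1 hy r hr1).comp hNk).norm.const_mul (‖Bc‖ * ‖x‖)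
    rw [norm_zero, mul_zero] at hy'
    have hbd : |B x y| ≤ 0 := by
      refine ge_of_tendsto' hy' fun k => ?_
      rw [← hpow (N * k)]
      refine (hBc _ _).trans ?_
      have h1 : ‖((g : V →ₗ[ℝ] V) ^ (N * k)) x‖ ≤ (2 ^ k)⁻¹ * ‖x‖ := by
        rw [← ha (N * k) ⟨x, hx⟩]
        refine ((a ^ (N * k)).le_opNorm _).trans ?_
        refine mul_le_mul_of_nonneg_right ?_ (norm_nonneg _)
        rw [pow_mul]
        rcases Nat.eq_zero_or_pos k with rfl | hk
        · rw [pow_zero, pow_zero, inv_one]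
          exact ContinuousLinearMap.norm_id_le
        · refine (norm_pow_le' _ hk).trans ?_
          rw [← inv_pow]
          exact pow_le_pow_left₀ (norm_nonneg _) (by linarith [hN]) _
      simp only [Function.comp, norm_smul, pow_mul r, hrN, norm_inv, norm_pow, Real.norm_ofNat]
      calc _ ≤ ‖Bc‖ * ((2 ^ k)⁻¹ * ‖x‖) * ‖((g : V →ₗ[ℝ] V) ^ (N * k)) y‖ := by gcongr
        _ = _ := by ring
    exact abs_nonpos_iff.1 hbd
  · refine le_antisymm
      (aux_finrank (g : V →ₗ[ℝ] V) (g.symm : V →ₗ[ℝ] V) B hsymm hnd ?_ Vlt Vgt hlt hgt)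
      (aux_finrank (g.symm : V →ₗ[ℝ] V) (g : V →ₗ[ℝ] V) B hsymm hnd ?_ Vgt Vlt hgt hlt)
    · intro x y
      rw [← hinv x]; simp
    · intro x y
      rw [← hinv]; simp
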